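/- If a connected graph G of the tetrahedral model with even bubble number b decomposes along a color-0 2-edge-cut into two parts G_L and G_R each with an odd number of bubbles, and each part is face-maximizing for its bubble number, then F(G) = (3/2)b + 2 < (3/2)b + 3; hence G does not maximize the number of faces among graphs with b bubbles. -/

import Mathlib

/-!  A combinatorial model of the Feynman graphs of the rank-3 tetrahedral
(`O(N)^3`) tensor model.

A graph consists of a finite set `B` of bubbles (copies of the tetrahedron
`K_4`); each bubble has four vertices, so the vertex set is `B × Fin 4`.
Inside every bubble the edges of colors `1,2,3` are given once and for all by
the three fixed-point-free involutions of `Fin 4` (the proper 3-edge-coloring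
of `K_4`).  The color-0 propagator edges, one per vertex, are encoded by a
fixed-point-free involution `pairing` of the vertex set. -/

open Equiv

/-- The color-`c` (for `c ∈ {1,2,3}`, here `c : Fin 3`) perfect matching on the
four vertices of a tetrahedral bubble. -/
def bubblePerm : Fin 3 → Equiv.Perm (Fin 4) :=
  ![Equiv.swap 0 1 * Equiv.swap 2 3,
    Equiv.swap 0 2 * Equiv.swap 1 3,
    Equiv.swap 0 3 * Equiv.swap 1 2]

/-- A Feynman graph of the tetrahedral tensor model: a finite set of `K_4`
bubbles together with a fixed-point-free involution of the vertex set
describing the color-0 edges. -/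
structure TGraph where
  B : Type
  [fintypeB : Fintype B]
  [decB : DecidableEq B]
  pairing : Equiv.Perm (B × Fin 4)
  invol : ∀ v, pairing (pairing v) = v
  fixfree : ∀ v, pairing v ≠ v

attribute [instance] TGraph.fintypeB TGraph.decB

namespace TGraph

/-- The vertex set of a graph. -/
abbrev V (G : TGraph) : Type := G.B × Fin 4

/-- The permutation of the vertices given by the color-`c` edges inside the
bubbles. -/
def colPerm (G : TGraph) (c : Fin 3) : Equiv.Perm G.V :=
  (Equiv.refl G.B).prodCongr (bubblePerm c)

/-- The number of bubbles of a graph. -/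
def b (G : TGraph) : ℕ := Fintype.card G.B

/-- The subgroup of permutations of the vertices generated by the color-0
pairing and the color-`c` matching: its orbits are exactly the faces of
color `c` (cycles alternating colors `0` and `c`). -/
def faceGroup (G : TGraph) (c : Fin 3) : Subgroup (Equiv.Perm G.V) :=
  Subgroup.closure {G.pairing, G.colPerm c}

/-- Two vertices lie on the same face of color `c`. -/
def sameFace (G : TGraph) (c : Fin 3) (u v : G.V) : Prop :=
  u ∈ MulAction.orbit (G.faceGroup c) v

/-- The number of faces of color `c` of the graph. -/
noncomputable def numFaces (G : TGraph) (c : Fin 3) : ℕ :=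
  Nat.card (MulAction.orbitRel.Quotient (G.faceGroup c) G.V)

/-- The total number of faces of the graph. -/
noncomputable def F (G : TGraph) : ℕ := ∑ c : Fin 3, G.numFaces c

/-- The length of the face of color `c` through the vertex `v` (a face of
length `n` consists of `n` color-0 edges and `n` color-`c` edges, hence `2n`
vertices). -/
noncomputable def faceLength (G : TGraph) (c : Fin 3) (v : G.V) : ℕ :=
  Nat.card (MulAction.orbit (G.faceGroup c) v) / 2

/-- The subgroup generated by all edges of the graph. -/
def fullGroup (G : TGraph) : Subgroup (Equiv.Perm G.V) :=
  Subgroup.closure ({G.pairing} ∪ Set.range G.colPerm)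

/-- A graph is connected if any vertex can be reached from any other one along
its edges. -/
def Connected (G : TGraph) : Prop :=
  ∀ u v : G.V, u ∈ MulAction.orbit G.fullGroup v

/-- One step along an edge of the graph avoiding the color-0 edges whose
endpoints belong to `S`. -/
def stepAvoiding (G : TGraph) (S : Set G.V) (u v : G.V) : Prop :=
  (∃ c, v = G.colPerm c u) ∨ (v = G.pairing u ∧ u ∉ S ∧ v ∉ S)

/-- Reachability in the graph with the color-0 edges meeting `S` removed. -/
def reachAvoiding (G : TGraph) (S : Set G.V) : G.V → G.V → Prop :=
  Relation.ReflTransGen (G.stepAvoiding S)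

/-- The pair of color-0 edges through the vertices `u` and `w` disconnects the
graph when removed.  Together with the requirement that the two edges be
distinct, this is the notion of a 2-edge-cut of color-0 edges. -/
def CutDisconnects (G : TGraph) (u w : G.V) : Prop :=
  ¬ ∀ x y : G.V, G.reachAvoiding {u, G.pairing u, w, G.pairing w} x y

/-- Two vertices are connected by a 2-point function if they are joined by a
color-0 edge, or if their two (distinct) color-0 edges form a 2-edge-cut. -/
def TwoPoint (G : TGraph) (x y : G.V) : Prop :=
  G.pairing x = y ∨ (y ≠ x ∧ y ≠ G.pairing x ∧ G.CutDisconnects x y)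

/-- The flip of the two color-0 edges `{u, pairing u}` and `{w, pairing w}`
(assumed distinct) which reconnects `u` with `w` (and `pairing u` with
`pairing w`): the pairing is conjugated by the transposition exchanging
`pairing u` and `w`.  The other flip of this pair of edges is
`G.flip u (G.pairing w)`. -/
def flip (G : TGraph) (u w : G.V) : TGraph where
  B := G.B
  pairing := Equiv.swap (G.pairing u) w * G.pairing * Equiv.swap (G.pairing u) w
  invol := by
    intro v
    simp only [Equiv.Perm.mul_apply, Equiv.swap_apply_self, G.invol]
  fixfree := by
    intro v h
    simp only [Equiv.Perm.mul_apply] at h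
    have h' : G.pairing (Equiv.swap (G.pairing u) w v) = Equiv.swap (G.pairing u) w v := by
      have := congrArg (Equiv.swap (G.pairing u) w) h
      simpa using this
    exact G.fixfree _ h'

/-- The face of color `c` through the color-0 edge `{v, pairing v}` has
length 2 (it consists of this edge, a color-`c` edge, a second color-0 edge
and a second color-`c` edge closing the cycle). -/
def FaceLen2 (G : TGraph) (c : Fin 3) (v : G.V) : Prop :=
  G.pairing v ≠ G.colPerm c v ∧
    G.pairing (G.colPerm c (G.pairing v)) = G.colPerm c v

/-- A proper face of length 2 of color `c` through `v`: a face of length 2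
whose two color-0 edges connect two distinct bubbles. -/
def ProperFace2 (G : TGraph) (c : Fin 3) (v : G.V) : Prop :=
  G.FaceLen2 c v ∧ (G.pairing v).1 ≠ v.1

/-- A graph maximizes the number of faces if it is connected and no connected
graph with the same number of bubbles has more faces. -/
def MaximizesFaces (G : TGraph) : Prop :=
  G.Connected ∧ ∀ H : TGraph, H.Connected → H.b = G.b → H.F ≤ G.F

/-- Isomorphisms of graphs: bijections of the vertex sets commuting with the
color-0 pairing and with the colored matchings inside the bubbles. -/
structure Iso (G H : TGraph) where
  toEquiv : G.V ≃ H.V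
  map_pairing : ∀ v, toEquiv (G.pairing v) = H.pairing (toEquiv v)
  map_col : ∀ c v, toEquiv (G.colPerm c v) = H.colPerm c (toEquiv v)

/-- Two graphs are isomorphic. -/
def IsIso (G H : TGraph) : Prop := Nonempty (Iso G H)

end TGraph

open TGraph

/-- The leading-order two-bubble graph `G_2`: two tetrahedral bubbles with
corresponding vertices joined by four color-0 edges, so that all six faces
have length 2. -/
def G2 : TGraph where
  B := Fin 2
  pairing := (Equiv.swap (0 : Fin 2) 1).prodCongr (Equiv.refl (Fin 4))
  invol := by
    rintro ⟨i, k⟩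
    simp [Equiv.prodCongr_apply, Equiv.swap_apply_self]
  fixfree := by
    rintro ⟨i, k⟩ h
    have hi : Equiv.swap (0 : Fin 2) 1 i = i := congrArg Prod.fst h
    fin_cases i <;> simp_all

/-- The double tadpole `G_1^{(c)}`: one tetrahedral bubble whose two color-0
edges each join two vertices already adjacent by an edge of color `c`. -/
def G1 (c : Fin 3) : TGraph where
  B := Fin 1
  pairing := (Equiv.refl (Fin 1)).prodCongr (bubblePerm c)
  invol := by
    rintro ⟨i, k⟩
    have hk : ∀ j : Fin 4, bubblePerm c (bubblePerm c j) = j := by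
      fin_cases c <;> decide
    simp [Equiv.prodCongr_apply, hk]
  fixfree := by
    rintro ⟨i, k⟩ h
    have hk : bubblePerm c k = k := congrArg Prod.snd h
    have hne : ∀ j : Fin 4, bubblePerm c j ≠ j := by
      fin_cases c <;> decide
    exact hne k hk

namespace TGraph

variable (H K : TGraph)

/-- The image of a vertex of `H` in the glued graph. -/
def inlV (x : H.V) : (H.B ⊕ K.B) × Fin 4 := (Sum.inl x.1, x.2)

/-- The image of a vertex of `K` in the glued graph. -/
def inrV (y : K.V) : (H.B ⊕ K.B) × Fin 4 := (Sum.inr y.1, y.2)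

/-- The underlying function of the pairing of the graph obtained by gluing `H`
and `K` along the color-0 edges `{p, H.pairing p}` and `{q, K.pairing q}`:
these two edges are cut and the half-edges are reglued as `p — q` and
`H.pairing p — K.pairing q`.  The new pair of edges is a 2-edge-cut of the
resulting graph when `H` and `K` are connected. -/
def glueFun (p : H.V) (q : K.V) : (H.B ⊕ K.B) × Fin 4 → (H.B ⊕ K.B) × Fin 4 :=
  fun z =>
    match z with
    | (Sum.inl u, k) =>
        if (u, k) = p then inrV H K q
        else if (u, k) = H.pairing p then inrV H K (K.pairing q)
        else inlV H K (H.pairing (u, k))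
    | (Sum.inr u, k) =>
        if (u, k) = q then inlV H K p
        else if (u, k) = K.pairing q then inlV H K (H.pairing p)
        else inrV H K (K.pairing (u, k))

theorem glueFun_inlV (p : H.V) (q : K.V) (x : H.V) :
    glueFun H K p q (inlV H K x) =
      if x = p then inrV H K q
      else if x = H.pairing p then inrV H K (K.pairing q)
      else inlV H K (H.pairing x) := by
  cases x
  rfl

theorem glueFun_inrV (p : H.V) (q : K.V) (y : K.V) :
    glueFun H K p q (inrV H K y) =
      if y = q then inlV H K p
      else if y = K.pairing q then inlV H K (H.pairing p)
      else inrV H K (K.pairing y) := by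
  cases y
  rfl

theorem inlV_injective : Function.Injective (inlV H K) := by
  rintro ⟨u, k⟩ ⟨u', k'⟩ h
  have h1 : (Sum.inl u : H.B ⊕ K.B) = Sum.inl u' := congrArg Prod.fst h
  have h2 : k = k' := congrArg Prod.snd h
  exact Prod.ext (Sum.inl_injective h1) h2

theorem inrV_injective : Function.Injective (inrV H K) := by
  rintro ⟨u, k⟩ ⟨u', k'⟩ h
  have h1 : (Sum.inr u : H.B ⊕ K.B) = Sum.inr u' := congrArg Prod.fst h
  have h2 : k = k' := congrArg Prod.snd h
  exact Prod.ext (Sum.inr_injective h1) h2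

theorem inlV_ne_inrV (x : H.V) (y : K.V) : inlV H K x ≠ inrV H K y := by
  intro h
  exact Sum.inl_ne_inr (congrArg Prod.fst h)

theorem glueFun_invol_inl (p : H.V) (q : K.V) (x : H.V) :
    glueFun H K p q (glueFun H K p q (inlV H K x)) = inlV H K x := by
  rw [glueFun_inlV]
  by_cases h1 : x = p
  · rw [if_pos h1, glueFun_inrV, if_pos rfl, h1]
  · by_cases h2 : x = H.pairing p
    · rw [if_neg h1, if_pos h2, glueFun_inrV,
        if_neg (fun h => K.fixfree q h), if_pos rfl, h2]
    · have hne1 : H.pairing x ≠ p := by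
        intro h; apply h2
        have := congrArg H.pairing h
        rw [H.invol] at this; exact this
      have hne2 : H.pairing x ≠ H.pairing p := fun h => h1 (H.pairing.injective h)
      rw [if_neg h1, if_neg h2, glueFun_inlV, if_neg hne1, if_neg hne2, H.invol]

theorem glueFun_invol_inr (p : H.V) (q : K.V) (y : K.V) :
    glueFun H K p q (glueFun H K p q (inrV H K y)) = inrV H K y := by
  rw [glueFun_inrV]
  by_cases h1 : y = q
  · rw [if_pos h1, glueFun_inlV, if_pos rfl, h1]
  · by_cases h2 : y = K.pairing q
    · rw [if_neg h1, if_pos h2, glueFun_inlV,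
        if_neg (fun h => H.fixfree p h), if_pos rfl, h2]
    · have hne1 : K.pairing y ≠ q := by
        intro h; apply h2
        have := congrArg K.pairing h
        rw [K.invol] at this; exact this
      have hne2 : K.pairing y ≠ K.pairing q := fun h => h1 (K.pairing.injective h)
      rw [if_neg h1, if_neg h2, glueFun_inrV, if_neg hne1, if_neg hne2, K.invol]

theorem glueFun_involutive (p : H.V) (q : K.V) :
    Function.Involutive (glueFun H K p q) := by
  rintro ⟨(u | u), k⟩
  · exact glueFun_invol_inl H K p q (u, k)
  · exact glueFun_invol_inr H K p q (u, k)

theorem glueFun_fixfree (p : H.V) (q : K.V) :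
    ∀ z, glueFun H K p q z ≠ z := by
  have hl : ∀ x : H.V, glueFun H K p q (inlV H K x) ≠ inlV H K x := by
    intro x h
    rw [glueFun_inlV] at h
    by_cases h1 : x = p
    · rw [if_pos h1] at h
      exact inlV_ne_inrV H K x q h.symm
    · by_cases h2 : x = H.pairing p
      · rw [if_neg h1, if_pos h2] at h
        exact inlV_ne_inrV H K x (K.pairing q) h.symm
      · rw [if_neg h1, if_neg h2] at h
        exact H.fixfree x (inlV_injective H K h)
  have hr : ∀ y : K.V, glueFun H K p q (inrV H K y) ≠ inrV H K y := by
    intro y h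
    rw [glueFun_inrV] at h
    by_cases h1 : y = q
    · rw [if_pos h1] at h
      exact inlV_ne_inrV H K p y h
    · by_cases h2 : y = K.pairing q
      · rw [if_neg h1, if_pos h2] at h
        exact inlV_ne_inrV H K (H.pairing p) y h
      · rw [if_neg h1, if_neg h2] at h
        exact K.fixfree y (inrV_injective H K h)
  rintro ⟨(u | u), k⟩
  · exact hl (u, k)
  · exact hr (u, k)

/-- Gluing two graphs along a pair of color-0 edges.  When `H` and `K` are
connected, the two new color-0 edges form a 2-edge-cut of the glued graph, and
conversely every connected graph with a color-0 2-edge-cut arises this way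
from the two closed graphs obtained by cutting the two edges and closing each
side. -/
def glue (p : H.V) (q : K.V) : TGraph where
  B := H.B ⊕ K.B
  pairing := (glueFun_involutive H K p q).toPerm
  invol := fun v => glueFun_involutive H K p q v
  fixfree := fun v => glueFun_fixfree H K p q v

/-- Insertion of a melonic dipole (the 2-point graph obtained by cutting one
color-0 edge of `G_2`) on the color-0 edge `{v, G.pairing v}` of `G`. -/
def insertDipole (G : TGraph) (v : G.V) : TGraph :=
  glue G G2 v ((0 : Fin 2), (0 : Fin 4))

end TGraph

open TGraph

/-- Melonic graphs (up to isomorphism): `G_2` is melonic, and inserting a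
melonic dipole on any color-0 edge of a melonic graph yields a melonic
graph. -/
inductive IsMelonic : TGraph → Prop
  | base {G : TGraph} (h : IsIso G G2) : IsMelonic G
  | insert {G : TGraph} (hG : IsMelonic G) (v : G.V) {H : TGraph}
      (h : IsIso H (G.insertDipole v)) : IsMelonic H

/-- Double tadpoles decorated with melonic 2-point functions (up to
isomorphism): these are exactly the graphs obtained from one of the double
tadpoles `G_1^{(c)}` by repeatedly inserting melonic dipoles on color-0 edges,
i.e. double tadpoles whose two color-0 edges are replaced by melonic 2-point
functions. -/
inductive IsDecoratedTadpole : TGraph → Prop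
  | base {G : TGraph} (c : Fin 3) (h : IsIso G (G1 c)) : IsDecoratedTadpole G
  | insert {G : TGraph} (hG : IsDecoratedTadpole G) (v : G.V) {H : TGraph}
      (h : IsIso H (G.insertDipole v)) : IsDecoratedTadpole H

/-!
Count orbits by linear algebra: over any field `K`, the orbits of a group of permutations of `V` are
as many as the dimension of the space of invariant functions `V → K`.

In characteristic two the functions invariant under a perfect matching have dimension at least
`|V| / 2` and are pairwise orthogonal for the dot product. For three perfect matchings this yields
the nonnegativity of the genus of each jacket of a tensor graph, and summing over the jackets gives
`F ≤ 3/2 b + 3`. A function is invariant on a face of a glued graph exactly when it is so on both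
parts and the two values agree across the cut, so gluing loses one face of each color. Inserting
melonic dipoles in `G_1` and `G_2` shows that the bound on `F` is attained up to rounding, hence
that `2 F = 3 b + 5` for odd and `2 F = 3 b + 6` for even maximizers; two odd parts glue to a graph
with `2 F = 3 b + 4`.
-/

open Module

section Orbits

variable {V α β : Type*} {S : Set (Perm V)} {f : V → α} {u v : V}

/-- The function `f` is invariant under every permutation in `S`, that is, constant on the orbits of
the group generated by `S`. -/
def InvariantUnder (S : Set (Perm V)) (f : V → α) : Prop :=
  ∀ σ ∈ S, ∀ v, f (σ v) = f v

/-- The number of orbits of the group generated by `S`. -/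
noncomputable def orbitCount (S : Set (Perm V)) : ℕ :=
  Nat.card (MulAction.orbitRel.Quotient (Subgroup.closure S) V)

theorem invariantUnder_singleton {σ : Perm V} :
    InvariantUnder {σ} f ↔ ∀ v, f (σ v) = f v := by
  simp only [InvariantUnder, Set.mem_singleton_iff, forall_eq]

theorem invariantUnder_insert {σ : Perm V} :
    InvariantUnder (insert σ S) f ↔ (∀ v, f (σ v) = f v) ∧ InvariantUnder S f := by
  simp only [InvariantUnder, Set.forall_mem_insert]

theorem invariantUnder_pair {σ τ : Perm V} :
    InvariantUnder {σ, τ} f ↔ (∀ v, f (σ v) = f v) ∧ ∀ v, f (τ v) = f v := by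
  rw [invariantUnder_insert, invariantUnder_singleton]

theorem InvariantUnder.apply_eq_of_mem_closure (hf : InvariantUnder S f) {σ : Perm V}
    (hσ : σ ∈ Subgroup.closure S) (v : V) : f (σ v) = f v := by
  induction hσ using Subgroup.closure_induction generalizing v with
  | mem σ h => exact hf σ h v
  | one => rfl
  | mul σ τ _ _ hσ hτ => rw [Perm.mul_apply, hσ, hτ]
  | inv σ _ h => rw [← h (σ⁻¹ v), Perm.inv_def, σ.apply_symm_apply]

theorem InvariantUnder.apply_eq_of_mem_orbit (hf : InvariantUnder S f)
    (h : u ∈ MulAction.orbit (Subgroup.closure S) v) : f u = f v := by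
  obtain ⟨⟨σ, hσ⟩, rfl⟩ := h
  exact hf.apply_eq_of_mem_closure hσ v

theorem invariantUnder_mem_orbit (S : Set (Perm V)) (v : V) :
    InvariantUnder S (· ∈ MulAction.orbit (Subgroup.closure S) v) := by
  intro σ hσ w
  let σ' : Subgroup.closure S := ⟨σ, Subgroup.subset_closure hσ⟩
  simp only [← MulAction.orbit_eq_iff]
  exact congrArg (· = _) (MulAction.orbit_smul σ' w)

theorem mem_orbit_closure_iff :
    u ∈ MulAction.orbit (Subgroup.closure S) v ↔
      ∀ f : V → Prop, InvariantUnder S f → f u = f v := by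
  refine ⟨fun h f hf => hf.apply_eq_of_mem_orbit h, fun h => ?_⟩
  exact (h _ (invariantUnder_mem_orbit S v)).mpr (MulAction.mem_orbit_self v)

theorem orbitCount_le_one (h : ∀ u v : V, u ∈ MulAction.orbit (Subgroup.closure S) v) :
    orbitCount S ≤ 1 := by
  have : Subsingleton (MulAction.orbitRel.Quotient (Subgroup.closure S) V) :=
    ⟨fun a b => Quotient.inductionOn₂ a b fun u v => Quotient.sound (h u v)⟩
  exact Finite.card_le_one_iff_subsingleton.2 this

theorem InvariantUnder.card_le_orbitCount [Finite V] (hf : InvariantUnder S f)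
    (hsurj : Function.Surjective f) : Nat.card α ≤ orbitCount S := by
  have : Finite (MulAction.orbitRel.Quotient (Subgroup.closure S) V) := Quotient.finite _
  exact Nat.card_le_card_of_surjective (Quotient.lift f fun _ _ h => hf.apply_eq_of_mem_orbit h)
    (Quotient.lift_surjective _ _ hsurj)

end Orbits

section InvariantFunctions

variable {K V : Type*} [Field K]

/-- The space of `K`-valued functions invariant under every permutation in `S`; its dimension is the
number of orbits of the group generated by `S`. -/
def invariantFunctions (K : Type*) {V : Type*} [Field K] (S : Set (Perm V)) :
    Submodule K (V → K) where
  carrier := {f | InvariantUnder S f}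
  add_mem' hf hg σ hσ v := congrArg₂ (· + ·) (hf σ hσ v) (hg σ hσ v)
  zero_mem' _ _ _ := rfl
  smul_mem' r _ hf σ hσ v := congrArg (r * ·) (hf σ hσ v)

theorem mem_invariantFunctions {S : Set (Perm V)} {f : V → K} :
    f ∈ invariantFunctions K S ↔ InvariantUnder S f := Iff.rfl

theorem invariantFunctions_insert (σ : Perm V) (S : Set (Perm V)) :
    invariantFunctions K (insert σ S) = invariantFunctions K {σ} ⊓ invariantFunctions K S := by
  ext f
  simp only [Submodule.mem_inf, mem_invariantFunctions, invariantUnder_insert,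
    invariantUnder_singleton]

theorem finrank_invariantFunctions [Finite V] (S : Set (Perm V)) :
    finrank K (invariantFunctions K S) = orbitCount S := by
  let π : V → MulAction.orbitRel.Quotient (Subgroup.closure S) V := Quotient.mk _
  have hπ : Function.Surjective π := Quotient.mk_surjective
  have := Fintype.ofFinite (MulAction.orbitRel.Quotient (Subgroup.closure S) V)
  have hrange : LinearMap.range (LinearMap.funLeft K K π) = invariantFunctions K S := by
    ext f
    constructor
    · rintro ⟨g, rfl⟩ σ hσ v
      exact congrArg g (Quotient.sound ⟨⟨σ, Subgroup.subset_closure hσ⟩, rfl⟩)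
    · exact fun hf => ⟨Quotient.lift f fun _ _ h => hf.apply_eq_of_mem_orbit h, rfl⟩
  rw [← hrange, LinearMap.finrank_range_of_inj (LinearMap.funLeft_injective_of_surjective _ _ _ hπ),
    finrank_fintype_fun_eq_card, orbitCount, Nat.card_eq_fintype_card]

theorem orbitCount_add_one_eq {X Y Z : Type*} [Finite X] [Finite Y] [Finite Z] {S : Set (Perm X)}
    {T : Set (Perm Y)} {U : Set (Perm Z)} (e : X ⊕ Y ≃ Z) (p : X) (q : Y)
    (h : ∀ f : Z → K, InvariantUnder U f ↔ InvariantUnder S (f ∘ e ∘ Sum.inl) ∧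
      InvariantUnder T (f ∘ e ∘ Sum.inr) ∧ f (e (Sum.inl p)) = f (e (Sum.inr q))) :
    orbitCount U + 1 = orbitCount S + orbitCount T := by
  let restrict : invariantFunctions K U →ₗ[K] invariantFunctions K S × invariantFunctions K T :=
    ((LinearMap.funLeft K K (e ∘ Sum.inl)).restrict fun f hf => ((h f).1 hf).1).prod
      ((LinearMap.funLeft K K (e ∘ Sum.inr)).restrict fun f hf => ((h f).1 hf).2.1)
  let jump : invariantFunctions K S × invariantFunctions K T →ₗ[K] K :=
    (LinearMap.proj p ∘ₗ Submodule.subtype _).coprod (-(LinearMap.proj q ∘ₗ Submodule.subtype _))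
  have jump_apply (z) : jump z = z.1.1 p - z.2.1 q := (sub_eq_add_neg _ _).symm
  have restrict_injective : Function.Injective restrict := by
    intro f g hfg
    refine Subtype.ext (funext fun z => ?_)
    obtain ⟨x | y, rfl⟩ := e.surjective z
    · exact congrFun (congrArg (fun w => w.1.1) hfg) x
    · exact congrFun (congrArg (fun w => w.2.1) hfg) y
  have jump_surjective : Function.Surjective jump := fun r =>
    ⟨(⟨fun _ => r, fun _ _ _ => rfl⟩, 0), by rw [jump_apply]; exact sub_zero r⟩
  have exact_restrict_jump : LinearMap.range restrict = LinearMap.ker jump := by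
    ext ⟨⟨f, hf⟩, ⟨g, hg⟩⟩
    rw [LinearMap.mem_ker, jump_apply, sub_eq_zero]
    constructor
    · rintro ⟨k, hk⟩
      rw [← hk]
      exact ((h k.1).1 k.2).2.2
    · intro hpq
      refine ⟨⟨Sum.elim f g ∘ e.symm, (h _).2 ?_⟩, ?_⟩
      · simpa [Function.comp_def] using ⟨hf, hg, hpq⟩
      · ext x <;> simp [restrict, LinearMap.funLeft]
  have rank_nullity := jump.finrank_range_add_finrank_ker
  rw [LinearMap.range_eq_top.2 jump_surjective, finrank_top, finrank_self, ← exact_restrict_jump,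
    LinearMap.finrank_range_of_inj restrict_injective, finrank_prod] at rank_nullity
  simpa only [finrank_invariantFunctions, add_comm 1] using rank_nullity

theorem finrank_add_finrank_le_of_dotProduct_eq_zero [Fintype V] {P Q : Submodule K (V → K)}
    (h : ∀ f ∈ P, ∀ g ∈ Q, f ⬝ᵥ g = 0) : finrank K P + finrank K Q ≤ Fintype.card V := by
  let B : LinearMap.BilinForm K (V → K) := dotProductBilin K K
  have ker_eq_bot : LinearMap.ker B = ⊥ :=
    LinearMap.ker_eq_bot'.2 fun f hf => dotProduct_eq_zero f (LinearMap.congr_fun hf)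
  have rank_eq := LinearMap.BilinForm.finrank_add_finrank_orthogonal' (B := B) P
  rw [ker_eq_bot, inf_bot_eq, finrank_bot, finrank_fintype_fun_eq_card] at rank_eq
  have hQ : Q ≤ B.orthogonal P := fun g hg f hf => h f hf g hg
  have := Submodule.finrank_mono hQ
  omega

end InvariantFunctions

/-- A perfect matching of `V`, encoded as the fixed-point-free involution exchanging the endpoints
of each of its edges. -/
structure IsPerfectMatching {V : Type*} (σ : Perm V) : Prop where
  involutive : Function.Involutive σ
  apply_ne : ∀ v, σ v ≠ v

section PerfectMatchings

variable {V : Type*} [Fintype V] {R : Type*} [Semiring R] [CharP R 2]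
  {K : Type*} [Field K] [CharP K 2] {a x y σ : Perm V}

theorem IsPerfectMatching.sum_eq_zero (hσ : IsPerfectMatching σ) {f : V → R}
    (hf : InvariantUnder {σ} f) : ∑ v, f v = 0 :=
  Finset.sum_ninvolution σ
    (fun v => by rw [invariantUnder_singleton.1 hf, CharTwo.add_self_eq_zero])
    (fun v _ => hσ.apply_ne v) (fun _ => Finset.mem_univ _) hσ.involutive

theorem IsPerfectMatching.dotProduct_eq_zero (hσ : IsPerfectMatching σ) {f g : V → R}
    (hf : InvariantUnder {σ} f) (hg : InvariantUnder {σ} g) : f ⬝ᵥ g = 0 :=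
  hσ.sum_eq_zero fun τ hτ v => congrArg₂ (· * ·) (hf τ hτ v) (hg τ hτ v)

theorem card_le_two_mul_finrank_invariantFunctions (hσ : Function.Involutive σ) :
    Fintype.card V ≤ 2 * finrank K (invariantFunctions K {σ}) := by
  let T : (V → K) →ₗ[K] (V → K) := LinearMap.id + LinearMap.funLeft K K σ
  have hker : LinearMap.ker T ≤ invariantFunctions K {σ} := fun f hf =>
    invariantUnder_singleton.2 fun v => (CharTwo.add_eq_zero.1 (congrFun hf v)).symm
  have hrange : LinearMap.range T ≤ invariantFunctions K {σ} := by
    rintro _ ⟨f, rfl⟩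
    refine invariantUnder_singleton.2 fun v => ?_
    change f (σ v) + f (σ (σ v)) = f v + f (σ v)
    rw [hσ, add_comm]
  have rank_nullity := T.finrank_range_add_finrank_ker
  rw [finrank_fintype_fun_eq_card] at rank_nullity
  linarith [Submodule.finrank_mono hker, Submodule.finrank_mono hrange]

/-- The Euler characteristic of the closed surface with edge-colored graph `{a, x, y}` is at most
twice its number of connected components. -/
theorem IsPerfectMatching.euler_inequality (ha : IsPerfectMatching a) (hx : IsPerfectMatching x)
    (hy : IsPerfectMatching y) :
    2 * (orbitCount {a, x} + orbitCount {a, y} + orbitCount {x, y}) ≤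
      Fintype.card V + 4 * orbitCount {a, x, y} := by
  simp only [← finrank_invariantFunctions (K := ZMod 2)]
  rw [invariantFunctions_insert a {x, y}, invariantFunctions_insert a {x},
    invariantFunctions_insert a {y}, invariantFunctions_insert x {y}]
  set A := invariantFunctions (ZMod 2) {a}
  set X := invariantFunctions (ZMod 2) {x}
  set Y := invariantFunctions (ZMod 2) {y}
  have orthogonal : ∀ f ∈ A ⊓ X ⊔ A ⊓ Y, ∀ g ∈ X ⊓ Y ⊔ A, f ⬝ᵥ g = 0 := by
    intro f hf g hg
    obtain ⟨f₁, ⟨hf₁A, hf₁X⟩, f₂, ⟨hf₂A, hf₂Y⟩, rfl⟩ := Submodule.mem_sup.1 hf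
    obtain ⟨g₁, ⟨hg₁X, hg₁Y⟩, g₂, hg₂A, rfl⟩ := Submodule.mem_sup.1 hg
    simp only [add_dotProduct, dotProduct_add, hx.dotProduct_eq_zero hf₁X hg₁X,
      ha.dotProduct_eq_zero hf₁A hg₂A, hy.dotProduct_eq_zero hf₂Y hg₁Y,
      ha.dotProduct_eq_zero hf₂A hg₂A, add_zero]
  have hle := finrank_add_finrank_le_of_dotProduct_eq_zero orthogonal
  have hA : Fintype.card V ≤ 2 * finrank (ZMod 2) A :=
    card_le_two_mul_finrank_invariantFunctions ha.involutive
  have hsup₁ := Submodule.finrank_sup_add_finrank_inf_eq (A ⊓ X) (A ⊓ Y)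
  have hsup₂ := Submodule.finrank_sup_add_finrank_inf_eq (X ⊓ Y) A
  rw [← inf_inf_distrib_left] at hsup₁
  rw [inf_comm (X ⊓ Y)] at hsup₂
  linarith

end PerfectMatchings

/-- An edge of a perfect matching is not a bridge of its union with another perfect matching. -/
theorem IsPerfectMatching.invariantUnder_of_forall_ne {V α : Type*} [Finite V] {a x : Perm V}
    (ha : IsPerfectMatching a) (hx : IsPerfectMatching x) {f : V → α} {p : V}
    (hf : InvariantUnder {x} f) (hfa : ∀ v, v ≠ p → v ≠ a p → f (a v) = f v) :
    InvariantUnder {a} f := by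
  classical
  have := Fintype.ofFinite V
  suffices hp : f (a p) = f p by
    refine invariantUnder_singleton.2 fun v => ?_
    rcases eq_or_ne v p with rfl | hvp
    · exact hp
    rcases eq_or_ne v (a p) with rfl | hvap
    · rw [ha.involutive, hp]
    · exact hfa v hvp hvap
  -- Both the level set of `f` through `p` and its union with `{a p}` are even, the former because
  -- of `x`, the latter because of `a`.
  let level : V → ZMod 2 := fun v => if f v = f p then 1 else 0
  have sum_level : ∑ v, level v = 0 :=
    hx.sum_eq_zero (invariantUnder_singleton.2 fun v => by
      simp only [level, invariantUnder_singleton.1 hf v])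
  have sum_update : ∑ v, Function.update level (a p) 1 v = 0 := by
    refine ha.sum_eq_zero (invariantUnder_singleton.2 fun v => ?_)
    rcases eq_or_ne v p with rfl | hvp
    · simp [level, (ha.apply_ne v).symm]
    rcases eq_or_ne v (a p) with rfl | hvap
    · simp [level, ha.involutive p, (ha.apply_ne p).symm]
    · simp [level, hvap, hvp, hfa v hvp hvap]
  have level_eq_one : level (a p) = 1 := by
    rw [Finset.sum_update_of_mem (Finset.mem_univ _)] at sum_update
    rw [Finset.sum_eq_add_sum_sdiff_singleton_of_mem (Finset.mem_univ (a p))] at sum_level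
    exact add_right_cancel (sum_level.trans sum_update.symm)
  by_contra hne
  simp [level, hne] at level_eq_one

namespace TGraph

section FaceBound

variable {G : TGraph} {i j : Fin 3}

theorem isPerfectMatching_pairing (G : TGraph) : IsPerfectMatching G.pairing :=
  ⟨G.invol, G.fixfree⟩

theorem isPerfectMatching_bubblePerm (c : Fin 3) : IsPerfectMatching (bubblePerm c) :=
  ⟨by revert c; unfold Function.Involutive; decide, by revert c; decide⟩

theorem isPerfectMatching_colPerm (G : TGraph) (c : Fin 3) : IsPerfectMatching (G.colPerm c) :=
  ⟨fun v => Prod.ext rfl ((isPerfectMatching_bubblePerm c).involutive v.2),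
    fun v h => (isPerfectMatching_bubblePerm c).apply_ne v.2 (congrArg Prod.snd h)⟩

theorem bubblePerm_eq_mul (hij : i ≠ j) {c : Fin 3} (hi : c ≠ i) (hj : c ≠ j) :
    bubblePerm c = bubblePerm i * bubblePerm j := by
  revert i j c
  decide

theorem colPerm_eq_mul (G : TGraph) (hij : i ≠ j) {c : Fin 3} (hi : c ≠ i) (hj : c ≠ j) :
    G.colPerm c = G.colPerm i * G.colPerm j := by
  rw [colPerm, bubblePerm_eq_mul hij hi hj]
  rfl

theorem closure_pairing_colPerm_colPerm (G : TGraph) (hij : i ≠ j) :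
    Subgroup.closure {G.pairing, G.colPerm i, G.colPerm j} = G.fullGroup := by
  refine le_antisymm (Subgroup.closure_mono ?_) ((Subgroup.closure_le _).2 ?_)
  · rintro σ (rfl | rfl | rfl)
    exacts [.inl rfl, .inr ⟨i, rfl⟩, .inr ⟨j, rfl⟩]
  have hmemi : G.colPerm i ∈ Subgroup.closure {G.pairing, G.colPerm i, G.colPerm j} :=
    Subgroup.subset_closure (by simp)
  have hmemj : G.colPerm j ∈ Subgroup.closure {G.pairing, G.colPerm i, G.colPerm j} :=
    Subgroup.subset_closure (by simp)
  rintro σ (rfl | ⟨c, rfl⟩)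
  · exact Subgroup.subset_closure (by simp)
  by_cases hi : c = i
  · rwa [hi]
  by_cases hj : c = j
  · rwa [hj]
  rw [G.colPerm_eq_mul hij hi hj]
  exact mul_mem hmemi hmemj

theorem b_le_orbitCount (G : TGraph) (i j : Fin 3) :
    G.b ≤ orbitCount {G.colPerm i, G.colPerm j} := by
  rw [b, ← Nat.card_eq_fintype_card]
  exact InvariantUnder.card_le_orbitCount (f := Prod.fst)
    (invariantUnder_pair.2 ⟨fun _ => rfl, fun _ => rfl⟩) Prod.fst_surjective

/-- The jacket of a tensor graph containing the colors `0`, `i` and `j` has nonnegative genus. -/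
theorem Connected.numFaces_add_numFaces_le (hG : G.Connected) (hij : i ≠ j) :
    G.numFaces i + G.numFaces j ≤ G.b + 2 := by
  have euler := G.isPerfectMatching_pairing.euler_inequality (G.isPerfectMatching_colPerm i)
    (G.isPerfectMatching_colPerm j)
  have connected : orbitCount {G.pairing, G.colPerm i, G.colPerm j} ≤ 1 :=
    orbitCount_le_one (by rw [G.closure_pairing_colPerm_colPerm hij]; exact hG)
  have card_V : Fintype.card (G.B × Fin 4) = G.b * 4 := Fintype.card_prod _ _
  have bubbles := G.b_le_orbitCount i j
  change 2 * (G.numFaces i + G.numFaces j + _) ≤ _ at euler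
  omega

theorem Connected.two_mul_F_le (hG : G.Connected) : 2 * G.F ≤ 3 * G.b + 6 := by
  have h₀₁ := hG.numFaces_add_numFaces_le (show (0 : Fin 3) ≠ 1 by decide)
  have h₀₂ := hG.numFaces_add_numFaces_le (show (0 : Fin 3) ≠ 2 by decide)
  have h₁₂ := hG.numFaces_add_numFaces_le (show (1 : Fin 3) ≠ 2 by decide)
  rw [F, Fin.sum_univ_three]
  omega

end FaceBound

theorem connected_iff {G : TGraph} :
    G.Connected ↔ ∀ f : G.V → Prop, (∀ v, f (G.pairing v) = f v) →
      (∀ c v, f (G.colPerm c v) = f v) → ∀ u v, f u = f v := by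
  have invariant_iff (f : G.V → Prop) : InvariantUnder ({G.pairing} ∪ Set.range G.colPerm) f ↔
      (∀ v, f (G.pairing v) = f v) ∧ ∀ c v, f (G.colPerm c v) = f v := by
    simp only [InvariantUnder, Set.singleton_union, Set.forall_mem_insert, Set.forall_mem_range]
  constructor
  · exact fun h f hpairing hcol u v =>
      mem_orbit_closure_iff.1 (h u v) f ((invariant_iff f).2 ⟨hpairing, hcol⟩)
  · refine fun h u v => mem_orbit_closure_iff.2 fun f hf => ?_
    exact h f ((invariant_iff f).1 hf).1 ((invariant_iff f).1 hf).2 u v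

section Glue

variable (H K : TGraph) (p : H.V) (q : K.V) (c : Fin 3) {α : Type*}

theorem glue_pairing_inlV (x : H.V) : (glue H K p q).pairing (inlV H K x) =
    if x = p then inrV H K q
    else if x = H.pairing p then inrV H K (K.pairing q)
    else inlV H K (H.pairing x) := glueFun_inlV H K p q x

theorem glue_pairing_inrV (y : K.V) : (glue H K p q).pairing (inrV H K y) =
    if y = q then inlV H K p
    else if y = K.pairing q then inlV H K (H.pairing p)
    else inrV H K (K.pairing y) := glueFun_inrV H K p q y

/-- The vertices of a glued graph are those of its two parts. -/
def glueVertexEquiv : H.V ⊕ K.V ≃ (glue H K p q).V :=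
  (Equiv.sumProdDistrib H.B K.B (Fin 4)).symm

theorem forall_glue_vertex {P : (glue H K p q).V → Prop} :
    (∀ v, P v) ↔ (∀ x, P (inlV H K x)) ∧ ∀ y, P (inrV H K y) :=
  (glueVertexEquiv H K p q).surjective.forall.trans Sum.forall

variable {H K p q c} {f : (glue H K p q).V → α}

theorem invariantUnder_comp_inlV
    (hf : InvariantUnder {(glue H K p q).pairing, (glue H K p q).colPerm c} f) :
    InvariantUnder {H.pairing, H.colPerm c} (f ∘ inlV H K) := by
  obtain ⟨hpairing, hcol⟩ := invariantUnder_pair.1 hf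
  have hcolH : InvariantUnder {H.colPerm c} (f ∘ inlV H K) :=
    invariantUnder_singleton.2 fun x => hcol (inlV H K x)
  refine invariantUnder_insert.2 ⟨invariantUnder_singleton.1 ?_, hcolH⟩
  refine H.isPerfectMatching_pairing.invariantUnder_of_forall_ne (p := p)
    (H.isPerfectMatching_colPerm c) hcolH fun x hxp hxp' => ?_
  have := hpairing (inlV H K x)
  rwa [glue_pairing_inlV, if_neg hxp, if_neg hxp'] at this

theorem invariantUnder_comp_inrV
    (hf : InvariantUnder {(glue H K p q).pairing, (glue H K p q).colPerm c} f) :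
    InvariantUnder {K.pairing, K.colPerm c} (f ∘ inrV H K) := by
  obtain ⟨hpairing, hcol⟩ := invariantUnder_pair.1 hf
  have hcolK : InvariantUnder {K.colPerm c} (f ∘ inrV H K) :=
    invariantUnder_singleton.2 fun y => hcol (inrV H K y)
  refine invariantUnder_insert.2 ⟨invariantUnder_singleton.1 ?_, hcolK⟩
  refine K.isPerfectMatching_pairing.invariantUnder_of_forall_ne (p := q)
    (K.isPerfectMatching_colPerm c) hcolK fun y hyq hyq' => ?_
  have := hpairing (inrV H K y)
  rwa [glue_pairing_inrV, if_neg hyq, if_neg hyq'] at this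

theorem invariantUnder_glue_iff :
    InvariantUnder {(glue H K p q).pairing, (glue H K p q).colPerm c} f ↔
      InvariantUnder {H.pairing, H.colPerm c} (f ∘ inlV H K) ∧
        InvariantUnder {K.pairing, K.colPerm c} (f ∘ inrV H K) ∧
          f (inlV H K p) = f (inrV H K q) := by
  constructor
  · intro hf
    refine ⟨invariantUnder_comp_inlV hf, invariantUnder_comp_inrV hf, ?_⟩
    have := (invariantUnder_pair.1 hf).1 (inlV H K p)
    rw [glue_pairing_inlV, if_pos rfl] at this
    exact this.symm
  · rintro ⟨hH, hK, hpq⟩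
    obtain ⟨hpairingH, hcolH⟩ := invariantUnder_pair.1 hH
    obtain ⟨hpairingK, hcolK⟩ := invariantUnder_pair.1 hK
    have hpq' : f (inlV H K (H.pairing p)) = f (inrV H K (K.pairing q)) :=
      (hpairingH p).trans (hpq.trans (hpairingK q).symm)
    refine invariantUnder_pair.2 ⟨(forall_glue_vertex H K p q).2 ⟨fun x => ?_, fun y => ?_⟩,
      (forall_glue_vertex H K p q).2 ⟨hcolH, hcolK⟩⟩
    · rw [glue_pairing_inlV]
      split_ifs with hxp hxp'
      · rw [hxp, hpq]
      · rw [hxp', hpq']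
      · exact hpairingH x
    · rw [glue_pairing_inrV]
      split_ifs with hyq hyq'
      · rw [hyq, hpq]
      · rw [hyq', hpq']
      · exact hpairingK y

variable (H K p q c)

theorem glue_numFaces :
    (glue H K p q).numFaces c + 1 = H.numFaces c + K.numFaces c :=
  orbitCount_add_one_eq (K := ZMod 2) (glueVertexEquiv H K p q) p q
    fun _ => invariantUnder_glue_iff

theorem glue_F : (glue H K p q).F + 3 = H.F + K.F := by
  simp only [F, ← Finset.sum_add_distrib, ← glue_numFaces H K p q]
  simp [Finset.sum_add_distrib]

theorem glue_b : (glue H K p q).b = H.b + K.b :=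
  Fintype.card_sum

variable {H K}

theorem Connected.glue (hH : H.Connected) (hK : K.Connected) : (glue H K p q).Connected := by
  rw [connected_iff] at hH hK ⊢
  intro f hpairing hcol
  have hglue c := invariantUnder_glue_iff.1 (invariantUnder_pair.2 ⟨hpairing, hcol c⟩)
  have hf : ∀ v, f v = f (inlV H K p) := by
    refine (forall_glue_vertex H K p q).2 ⟨fun x => ?_, fun y => ?_⟩
    · exact hH (f ∘ inlV H K) (invariantUnder_pair.1 (hglue 0).1).1
        (fun c => (invariantUnder_pair.1 (hglue c).1).2) x p
    · exact (hK (f ∘ inrV H K) (invariantUnder_pair.1 (hglue 0).2.1).1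
        (fun c => (invariantUnder_pair.1 (hglue c).2.1).2) y q).trans (hglue 0).2.2.symm
  exact fun u v => (hf u).trans (hf v).symm

end Glue

section Examples

theorem eq_zero_or_exists_bubblePerm_zero_eq (k : Fin 4) : k = 0 ∨ ∃ c, bubblePerm c 0 = k := by
  revert k
  decide

theorem apply_eq_apply_zero_of_colPerm {G : TGraph} {α : Type*} {f : G.V → α}
    (hf : ∀ c v, f (G.colPerm c v) = f v) (u : G.B) (k : Fin 4) : f (u, k) = f (u, 0) := by
  obtain rfl | ⟨c, rfl⟩ := eq_zero_or_exists_bubblePerm_zero_eq k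
  · rfl
  · exact hf c (u, 0)

theorem connected_G1 (c : Fin 3) : (G1 c).Connected := by
  refine connected_iff.2 fun f _ hcol => ?_
  rintro ⟨u, k⟩ ⟨v, l⟩
  rw [apply_eq_apply_zero_of_colPerm hcol, apply_eq_apply_zero_of_colPerm hcol v,
    Subsingleton.elim (α := Fin 1) u v]

theorem connected_G2 : G2.Connected := by
  refine connected_iff.2 fun f hpairing hcol => ?_
  have hf : ∀ v : G2.V, f v = f ((0 : Fin 2), (0 : Fin 4)) := by
    rintro ⟨u, k⟩
    refine (apply_eq_apply_zero_of_colPerm hcol u k).trans ?_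
    obtain rfl | rfl := (Fin.exists_fin_two (p := (u = ·))).1 ⟨u, rfl⟩
    · rfl
    · exact hpairing ((0 : Fin 2), (0 : Fin 4))
  exact fun u v => (hf u).trans (hf v).symm

theorem one_le_numFaces (G : TGraph) [Nonempty G.B] (c : Fin 3) : 1 ≤ G.numFaces c := by
  rw [← Nat.card_unique (α := Unit)]
  exact InvariantUnder.card_le_orbitCount (f := fun _ => ()) (fun _ _ _ => rfl)
    fun _ => ⟨Classical.arbitrary _, rfl⟩

theorem exists_surjective_comp_bubblePerm_eq (c : Fin 3) :
    ∃ edge : Fin 4 → Bool, Function.Surjective edge ∧ ∀ k, edge (bubblePerm c k) = edge k :=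
  ⟨fun k => k = 0 ∨ k = bubblePerm c 0, by revert c; decide, by revert c; decide⟩

-- The two edges of color `c` of a bubble cannot be joined by a face whose color-0 edges project to
-- edges of color `c` or to single vertices of the tetrahedron.
theorem two_le_numFaces (G : TGraph) [Nonempty G.B] {c : Fin 3}
    (h : ∀ v, (G.pairing v).2 = v.2 ∨ (G.pairing v).2 = bubblePerm c v.2) :
    2 ≤ G.numFaces c := by
  obtain ⟨edge, edge_surjective, edge_bubblePerm⟩ := exists_surjective_comp_bubblePerm_eq c
  have hcard : Nat.card Bool = 2 := by simp
  rw [← hcard]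
  refine InvariantUnder.card_le_orbitCount (f := fun v : G.V => edge v.2)
    (invariantUnder_pair.2 ⟨fun v => ?_, fun v => edge_bubblePerm v.2⟩)
    (edge_surjective.comp Prod.snd_surjective)
  rcases h v with h | h <;> simp only [h, edge_bubblePerm]

theorem F_G1 (c : Fin 3) : (G1 c).F = 4 := by
  have : Nonempty (G1 c).B := ⟨(0 : Fin 1)⟩
  have upper : 2 * (G1 c).F ≤ 3 * 1 + 6 := (connected_G1 c).two_mul_F_le
  have lower : ∑ d : Fin 3, (if d = c then 2 else 1) ≤ (G1 c).F := by
    refine Finset.sum_le_sum fun d _ => ?_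
    split_ifs with hd
    · subst hd
      exact two_le_numFaces _ fun _ => .inr rfl
    · exact one_le_numFaces _ d
  have sum_eq : ∀ c : Fin 3, ∑ d : Fin 3, (if d = c then 2 else 1) = 4 := by decide
  rw [sum_eq c] at lower
  omega

theorem F_G2 : G2.F = 6 := by
  have : Nonempty G2.B := ⟨(0 : Fin 2)⟩
  have upper : 2 * G2.F ≤ 3 * 2 + 6 := connected_G2.two_mul_F_le
  have lower : ∑ _c : Fin 3, 2 ≤ G2.F :=
    Finset.sum_le_sum fun _ _ => two_le_numFaces _ fun _ => .inl rfl
  simp only [Fin.sum_const, smul_eq_mul] at lower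
  omega

end Examples

section Maximizers

variable {G : TGraph}

theorem insertDipole_b (G : TGraph) (v : G.V) : (G.insertDipole v).b = G.b + 2 :=
  glue_b G G2 v _

theorem insertDipole_F (G : TGraph) (v : G.V) : (G.insertDipole v).F = G.F + 3 := by
  have hglue := glue_F G G2 v ((0 : Fin 2), (0 : Fin 4))
  rw [F_G2] at hglue
  exact Nat.add_right_cancel hglue

theorem Connected.exists_b_eq_and_F_eq (hG : G.Connected) (v : G.V) (m : ℕ) :
    ∃ H : TGraph, H.Connected ∧ H.b = G.b + 2 * m ∧ H.F = G.F + 3 * m := by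
  induction m generalizing G with
  | zero => exact ⟨G, hG, rfl, rfl⟩
  | succ m ih =>
    obtain ⟨H, hH, hb, hF⟩ := ih (hG.glue v _ connected_G2) (inlV G G2 v)
    rw [← insertDipole, insertDipole_b] at hb
    rw [← insertDipole, insertDipole_F] at hF
    exact ⟨H, hH, by omega, by omega⟩

theorem MaximizesFaces.two_mul_F_of_odd (hG : G.MaximizesFaces) (hodd : Odd G.b) :
    2 * G.F = 3 * G.b + 5 := by
  obtain ⟨m, hm⟩ := hodd
  obtain ⟨H, hH, hb, hF⟩ := (connected_G1 0).exists_b_eq_and_F_eq ((0 : Fin 1), (0 : Fin 4)) m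
  have hb₁ : (G1 0).b = 1 := rfl
  have lower : H.F ≤ G.F := hG.2 H hH (by omega)
  have upper : 2 * G.F ≤ 3 * G.b + 6 := hG.1.two_mul_F_le
  rw [F_G1] at hF
  omega

theorem MaximizesFaces.two_mul_F_of_even (hG : G.MaximizesFaces) (heven : Even G.b)
    (hpos : 0 < G.b) : 2 * G.F = 3 * G.b + 6 := by
  obtain ⟨m, hm⟩ := heven
  obtain ⟨H, hH, hb, hF⟩ := connected_G2.exists_b_eq_and_F_eq ((0 : Fin 2), (0 : Fin 4)) (m - 1)
  have hb₂ : G2.b = 2 := rfl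
  have lower : H.F ≤ G.F := hG.2 H hH (by omega)
  have upper : 2 * G.F ≤ 3 * G.b + 6 := hG.1.two_mul_F_le
  rw [F_G2] at hF
  omega

end Maximizers

end TGraph

/-- If a connected graph with even bubble number decomposes
along a color-0 2-edge-cut into two parts `H` and `K`, each with an odd number
of bubbles and each face-maximizing for its bubble number, then the glued
graph `G` has `F(G) = (3/2) b + 2 < (3/2) b + 3`, hence does not maximize the
number of faces among graphs with `b` bubbles. -/
theorem odd_odd_cut_not_maximal (H K : TGraph) (p : H.V) (q : K.V)
    (hH : H.MaximizesFaces) (hK : K.MaximizesFaces)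
    (hoddH : Odd H.b) (hoddK : Odd K.b) :
    ((glue H K p q).F : ℚ) = 3 / 2 * (glue H K p q).b + 2 ∧
      (3 : ℚ) / 2 * (glue H K p q).b + 2 < 3 / 2 * (glue H K p q).b + 3 ∧
      ¬ (glue H K p q).MaximizesFaces := by
  have hb := glue_b H K p q
  have hF : 2 * (glue H K p q).F = 3 * (glue H K p q).b + 4 := by
    have hFH := hH.two_mul_F_of_odd hoddH
    have hFK := hK.two_mul_F_of_odd hoddK
    have hglue := glue_F H K p q
    omega
  refine ⟨?_, by linarith, fun hmax => ?_⟩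
  · qify at hF
    linarith
  · have heven : Even (glue H K p q).b := hb ▸ hoddH.add_odd hoddK
    have hpos : 0 < (glue H K p q).b := hb ▸ Nat.add_pos_left hoddH.pos _
    have := hmax.two_mul_F_of_even heven hpos
    omega
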